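/- arXiv:2206.09348 — 3 statements merged into one kernel-verified Lean document; each statement's English description precedes it below -/
import Mathlib

section
/- For every class C of level l ∈ {0,…,L} and every y ∈ R^X, the recursively defined class score satisfies y_C = max{ ∑_{x∈X} y_x p_x − h_C(p) : p ∈ Δ(X), supp(p) ⊆ C }. -/
/-!
The nested entropy is a sum of conditional entropies along the tower. For weights `p ≥ 0` of any
mass on a class `C` of level `l`, let `relEnt` be the sum of the conditional entropies
`μ^(l'+1) (∑_{D' ⊲ D} p_{D'} log p_{D'} - p_D log p_D)` over the classes `D ⊆ C` of levels
`l' ∈ {l, …, L-1}`.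
Summation by parts (`relEnt_eq`) shows that it equals the nested entropy of `C` when `p_C = 1`.

The theorem follows from the homogeneous statement that
`∑_{x ∈ C} y_x p_x - relEnt ≤ y_C p_C`, with equality for some `p` of each prescribed mass `Q > 0`.
This is proved by induction from the singletons upwards: the induction hypothesis applied to the
children replaces the left-hand side by `∑_{C' ⊲ C} y_{C'} p_{C'}` minus the conditional entropy at
`C`, and that is maximised by the Gibbs variational principle (`gibbs_le`, `gibbs_eq`). Allowing
arbitrary mass is what makes maximisers on the children glue to one on `C`
(`exists_eq_scoreAux`).
-/

noncomputable section

namespace NestedBandits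

/-- A similarity structure of depth `L ≥ 1` on a finite set `X`, encoded by the map
`cls l x` = the similarity class of level `l` containing `x`. -/
structure SimStruct (X : Type*) [Fintype X] [DecidableEq X] where
  L : ℕ
  one_le_L : 1 ≤ L
  cls : ℕ → X → Finset X
  mem_cls : ∀ l x, x ∈ cls l x
  cls_zero : ∀ x, cls 0 x = Finset.univ
  cls_L : ∀ x, cls L x = {x}
  cls_congr : ∀ l x z, z ∈ cls l x → cls l z = cls l x
  cls_refines : ∀ l x, l < L → cls (l + 1) x ⊆ cls l x

variable {X : Type*} [Fintype X] [DecidableEq X]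

/-- The probability `p_C` of a class `C`. -/
def pC (p : X → ℝ) (C : Finset X) : ℝ := ∑ x ∈ C, p x

/-- The simplex `Δ(X)` of probability vectors on `X`. -/
def simplex (X : Type*) [Fintype X] : Set (X → ℝ) :=
  {p | (∀ x, 0 ≤ p x) ∧ ∑ x, p x = 1}

/-- `t * log t`, with the convention `0 * log 0 = 0` (automatic since `Real.log 0 = 0`). -/
def xlogx (t : ℝ) : ℝ := t * Real.log t

/-- Auxiliary class score: `k` is the number of levels below the class (so the class has
level `S.L - k`). -/
def scoreAux (S : SimStruct X) (μ : ℕ → ℝ) (y : X → ℝ) : ℕ → Finset X → ℝ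
  | 0, C => ∑ x ∈ C, y x
  | k + 1, C =>
      μ (S.L - k) *
        Real.log (∑ C' ∈ C.image (S.cls (S.L - k)), Real.exp (scoreAux S μ y k C' / μ (S.L - k)))

/-- The class score `y_C` of a class `C` of level `l`. -/
def score (S : SimStruct X) (μ : ℕ → ℝ) (y : X → ℝ) (l : ℕ) (C : Finset X) : ℝ :=
  scoreAux S μ y (S.L - l) C

/-- The nested choice probability `P_{x | C}(y)` where `C = S.cls l x` is the level-`l`
class of `x`: the product of the conditional choice probabilities along the chain of
classes from `C` down to `{x}`. -/
def condProb (S : SimStruct X) (μ : ℕ → ℝ) (y : X → ℝ) (l : ℕ) (x : X) : ℝ :=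
  ∏ l' ∈ Finset.Ico l S.L,
    Real.exp ((score S μ y (l' + 1) (S.cls (l' + 1) x) - score S μ y l' (S.cls l' x)) / μ (l' + 1))

/-- The nested entropy `h_C(p)` of a class `C` of level `l`. -/
def nestEnt (S : SimStruct X) (μ : ℕ → ℝ) (p : X → ℝ) (l : ℕ) (C : Finset X) : ℝ :=
  ∑ l' ∈ Finset.Icc (max l 1) S.L,
    (μ l' - μ (l' + 1)) * ∑ C' ∈ C.image (S.cls l'), xlogx (pC p C')

/-- The conditional entropy `h(p | C)` of a class `C` of level `l`. -/
def condEnt (S : SimStruct X) (μ : ℕ → ℝ) (p : X → ℝ) (l : ℕ) (C : Finset X) : ℝ :=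
  if l < S.L then
    μ (l + 1) * ∑ C' ∈ C.image (S.cls (l + 1)), pC p C' * (Real.log (pC p C') - Real.log (pC p C))
  else 0

/-- Auxiliary nested power sum: `k = S.L - l ≥ 1` levels below the class. -/
def npsAux (S : SimStruct X) (μ : ℕ → ℝ) (y c : X → ℝ) : ℕ → Finset X → ℝ
  | 0, _ => 0
  | 1, C => ∑ x ∈ C, condProb S μ y (S.L - 1) x * Real.exp (-c x / μ S.L)
  | k + 2, C =>
      ∑ C' ∈ C.image (S.cls (S.L - (k + 1))),
        Real.exp ((score S μ y (S.L - (k + 1)) C' - score S μ y (S.L - (k + 2)) C) /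
            μ (S.L - (k + 1))) *
          npsAux S μ y c (k + 1) C' ^ (μ (S.L - k) / μ (S.L - (k + 1)))

/-- The nested power sum `σ_{c,y}(C)` for a class `C` of level `l < S.L`. -/
def nps (S : SimStruct X) (μ : ℕ → ℝ) (y c : X → ℝ) (l : ℕ) (C : Finset X) : ℝ :=
  npsAux S μ y c (S.L - l) C

/-- The Fenchel coupling `F(p, y) = h(p) + y_X - ⟨y, p⟩`. -/
def fench (S : SimStruct X) (μ : ℕ → ℝ) (p y : X → ℝ) : ℝ :=
  nestEnt S μ p 0 Finset.univ + score S μ y 0 Finset.univ - ∑ x, y x * p x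

/-- The effective number of alternatives `N_eff = (∑_l √(N^l) R̄_l)²`. -/
def Neff (S : SimStruct X) (R : ℕ → Finset X → ℝ) : ℝ :=
  (∑ l ∈ Finset.Icc 1 S.L,
      Real.sqrt ((Finset.univ.image (S.cls l)).card) *
        Real.sqrt ((∑ C ∈ Finset.univ.image (S.cls l), R l C ^ 2) /
          ((Finset.univ.image (S.cls l)).card))) ^ 2

/-! ### Partition combinatorics of the tower -/

theorem cls_subset (S : SimStruct X) {l m : ℕ} (hlm : l ≤ m) (hm : m ≤ S.L) (x : X) :
    S.cls m x ⊆ S.cls l x := by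
  induction m, hlm using Nat.le_induction with
  | base => exact Finset.Subset.refl _
  | succ n _ ih => exact (S.cls_refines n x (by omega)).trans (ih (by omega))

theorem cls_eq_iff (S : SimStruct X) (l : ℕ) (x z : X) : S.cls l z = S.cls l x ↔ z ∈ S.cls l x :=
  ⟨fun h => h ▸ S.mem_cls l z, S.cls_congr l x z⟩

theorem pairwiseDisjoint_children (S : SimStruct X) (m : ℕ) (C : Finset X) :
    (↑(C.image (S.cls m)) : Set (Finset X)).PairwiseDisjoint id := by
  intro A hA B hB hAB
  simp only [Finset.coe_image, Set.mem_image] at hA hB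
  obtain ⟨a, _, rfl⟩ := hA
  obtain ⟨b, _, rfl⟩ := hB
  refine Finset.disjoint_left.2 fun z hz hz' => hAB ?_
  rw [← S.cls_congr m a z hz, ← S.cls_congr m b z hz']

theorem biUnion_children (S : SimStruct X) {l m : ℕ} (hlm : l ≤ m) (hm : m ≤ S.L) (x : X) :
    ((S.cls l x).image (S.cls m)).biUnion id = S.cls l x := by
  ext z
  simp only [Finset.mem_biUnion, Finset.mem_image, id]
  constructor
  · rintro ⟨_, ⟨a, ha, rfl⟩, hz⟩
    rw [← S.cls_congr l x a ha]
    exact cls_subset S hlm hm a hz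
  · exact fun hz => ⟨_, ⟨z, hz, rfl⟩, S.mem_cls m z⟩

/-- Summing over a class is summing over its subclasses of a deeper level `m`. -/
theorem sum_children (S : SimStruct X) {l m : ℕ} (hlm : l ≤ m) (hm : m ≤ S.L) (x : X)
    (g : X → ℝ) :
    ∑ C' ∈ (S.cls l x).image (S.cls m), ∑ z ∈ C', g z = ∑ z ∈ S.cls l x, g z := by
  conv_rhs => rw [← biUnion_children S hlm hm x]
  exact (Finset.sum_biUnion (pairwiseDisjoint_children S m _)).symm

/-- The level-`l'` subclasses of `C` are partitioned according to the level-`m` subclass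
containing them, for an intermediate level `m ≤ l'`. -/
theorem sum_grandchildren (S : SimStruct X) {l m l' : ℕ} (hlm : l ≤ m) (hml : m ≤ l')
    (hl' : l' ≤ S.L) (x : X) (f : Finset X → ℝ) :
    ∑ C' ∈ (S.cls l x).image (S.cls m), ∑ D ∈ C'.image (S.cls l'), f D
      = ∑ D ∈ (S.cls l x).image (S.cls l'), f D := by
  have hU : ((S.cls l x).image (S.cls m)).biUnion (fun C' => C'.image (S.cls l'))
      = (S.cls l x).image (S.cls l') := by
    conv_rhs => rw [← biUnion_children S hlm (hml.trans hl') x]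
    rw [Finset.biUnion_image]
    rfl
  rw [← hU, Finset.sum_biUnion]
  intro A hA B hB hAB
  refine Finset.disjoint_left.2 fun D hDA hDB => ?_
  have hd := Finset.disjoint_left.1 (pairwiseDisjoint_children S m _ hA hB hAB)
  simp only [Finset.coe_image, Set.mem_image] at hA hB
  obtain ⟨a, _, rfl⟩ := hA
  obtain ⟨b, _, rfl⟩ := hB
  simp only [Finset.mem_image] at hDA hDB
  obtain ⟨u, hu, rfl⟩ := hDA
  obtain ⟨v, hv, huv⟩ := hDB
  -- a common subclass `D` would put `u` in both `A` and `B`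
  have hu' : u ∈ S.cls m v := cls_subset S hml hl' v (huv ▸ S.mem_cls l' u)
  rw [S.cls_congr m b v hv] at hu'
  exact hd hu hu'

/-! ### The Gibbs variational principle -/

/-- One-level upper bound: a Gibbs inequality for weights `q` of arbitrary total mass. -/
theorem gibbs_le {ι : Type*} (s : Finset ι) (hs : s.Nonempty) (a q : ι → ℝ) {m : ℝ} (hm : 0 < m)
    (hq : ∀ i ∈ s, 0 ≤ q i) :
    ∑ i ∈ s, a i * q i - m * (∑ i ∈ s, xlogx (q i) - xlogx (∑ i ∈ s, q i))
      ≤ m * Real.log (∑ i ∈ s, Real.exp (a i / m)) * ∑ i ∈ s, q i := by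
  set Z := ∑ i ∈ s, Real.exp (a i / m) with hZ
  set Q := ∑ i ∈ s, q i with hQ
  have hZ0 : 0 < Z := Finset.sum_pos (fun i _ => Real.exp_pos _) hs
  have hQ0 : 0 ≤ Q := Finset.sum_nonneg hq
  -- `log t ≤ t - 1` at `t = Q * exp (a i / m) / (Z * q i)`
  have key : ∀ i ∈ s, q i * (a i / m + Real.log Q - Real.log Z - Real.log (q i))
      ≤ Q * (Real.exp (a i / m) / Z) - q i := by
    intro i hi
    rcases (hq i hi).eq_or_lt with h0 | h0
    · rw [← h0]
      simp only [zero_mul, sub_zero]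
      positivity
    · have hQp : 0 < Q := h0.trans_le (Finset.single_le_sum hq hi)
      have h1 := Real.log_le_sub_one_of_pos
        (show 0 < Q * Real.exp (a i / m) / (Z * q i) by positivity)
      rw [Real.log_div (by positivity) (by positivity), Real.log_mul hQp.ne' (by positivity),
        Real.log_mul hZ0.ne' h0.ne', Real.log_exp] at h1
      calc _ = q i * (Real.log Q + a i / m - (Real.log Z + Real.log (q i))) := by ring
        _ ≤ q i * (Q * Real.exp (a i / m) / (Z * q i) - 1) := by gcongr
        _ = _ := by field_simp
  have hsum := Finset.sum_le_sum key
  have hR : ∑ i ∈ s, (Q * (Real.exp (a i / m) / Z) - q i) = 0 := by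
    rw [Finset.sum_sub_distrib, ← Finset.mul_sum, ← Finset.sum_div, ← hZ, ← hQ, div_self hZ0.ne']
    ring
  have hLHS : m * ∑ i ∈ s, q i * (a i / m + Real.log Q - Real.log Z - Real.log (q i))
      = ∑ i ∈ s, a i * q i - m * (∑ i ∈ s, xlogx (q i) - xlogx Q) - m * Real.log Z * Q := by
    have h2 : m * (∑ i ∈ s, xlogx (q i) - xlogx Q) + m * Real.log Z * Q
        = ∑ i ∈ s, m * (xlogx (q i) - q i * Real.log Q + q i * Real.log Z) := by
      rw [← Finset.mul_sum, Finset.sum_add_distrib, Finset.sum_sub_distrib, ← Finset.sum_mul,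
        ← Finset.sum_mul, ← hQ]
      simp only [xlogx]
      ring
    rw [sub_sub, h2, ← Finset.sum_sub_distrib, Finset.mul_sum]
    refine Finset.sum_congr rfl fun i _ => ?_
    simp only [xlogx]
    field_simp
    ring
  have h3 := mul_le_mul_of_nonneg_left (hsum.trans_eq hR) hm.le
  linarith

/-- The logit weights of total mass `Q` attain equality in `gibbs_le`. -/
theorem gibbs_eq {ι : Type*} (s : Finset ι) (hs : s.Nonempty) (a : ι → ℝ) {m Q : ℝ} (hm : 0 < m)
    (hQ : 0 < Q) :
    ∃ q : ι → ℝ, (∀ i, 0 < q i) ∧ ∑ i ∈ s, q i = Q ∧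
      ∑ i ∈ s, a i * q i - m * (∑ i ∈ s, xlogx (q i) - xlogx Q)
        = m * Real.log (∑ i ∈ s, Real.exp (a i / m)) * Q := by
  set Z := ∑ i ∈ s, Real.exp (a i / m) with hZ
  have hZ0 : 0 < Z := Finset.sum_pos (fun i _ => Real.exp_pos _) hs
  have hqQ : ∑ i ∈ s, Q * Real.exp (a i / m) / Z = Q := by
    rw [← Finset.sum_div, ← Finset.mul_sum, ← hZ, mul_div_cancel_right₀ _ hZ0.ne']
  refine ⟨fun i => Q * Real.exp (a i / m) / Z, fun i => by positivity, hqQ, ?_⟩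
  have hx : ∀ i, m * xlogx (Q * Real.exp (a i / m) / Z)
      = a i * (Q * Real.exp (a i / m) / Z)
        + (Q * Real.exp (a i / m) / Z) * (m * (Real.log Q - Real.log Z)) := by
    intro i
    rw [xlogx, Real.log_div (by positivity) hZ0.ne', Real.log_mul hQ.ne' (by positivity),
      Real.log_exp]
    field_simp
    ring
  rw [mul_sub, Finset.mul_sum, Finset.sum_congr rfl fun i _ => hx i, Finset.sum_add_distrib,
    ← Finset.sum_mul, hqQ, xlogx]
  ring

/-! ### Nested entropy as a sum of conditional entropies -/

/-- The total conditional entropy of `p` below a class `C` of level `S.L - k`: the sum of the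
conditional entropies at `C` and at all classes below it. Unlike `nestEnt`, it is
positively homogeneous in `p`. -/
def relEnt (S : SimStruct X) (μ : ℕ → ℝ) (p : X → ℝ) : ℕ → Finset X → ℝ
  | 0, _ => 0
  | k + 1, C =>
      ∑ C' ∈ C.image (S.cls (S.L - k)), relEnt S μ p k C' +
        μ (S.L - k) * (∑ C' ∈ C.image (S.cls (S.L - k)), xlogx (pC p C') - xlogx (pC p C))

/-- Telescoping: `relEnt` is the nested entropy strictly below `C`, normalised at `C`. -/
theorem relEnt_eq (S : SimStruct X) (μ : ℕ → ℝ) (hμ_last : μ (S.L + 1) = 0) (p : X → ℝ) (k : ℕ)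
    (hk : k ≤ S.L) (x : X) :
    relEnt S μ p k (S.cls (S.L - k) x)
      = ∑ l' ∈ Finset.Icc (S.L - k + 1) S.L, (μ l' - μ (l' + 1)) *
          ∑ C' ∈ (S.cls (S.L - k) x).image (S.cls l'), xlogx (pC p C')
        - μ (S.L - k + 1) * xlogx (pC p (S.cls (S.L - k) x)) := by
  induction k generalizing x with
  | zero => simp [relEnt, hμ_last]
  | succ k ih =>
    obtain ⟨l, hl⟩ : ∃ l, S.L - (k + 1) = l := ⟨_, rfl⟩
    have hl1 : S.L - k = l + 1 := by omega
    rw [relEnt, hl, hl1]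
    rw [hl1] at ih
    have hch : ∀ C' ∈ (S.cls l x).image (S.cls (l + 1)), relEnt S μ p k C'
        = ∑ l' ∈ Finset.Icc (l + 1 + 1) S.L, (μ l' - μ (l' + 1)) *
          ∑ D ∈ C'.image (S.cls l'), xlogx (pC p D) - μ (l + 1 + 1) * xlogx (pC p C') := by
      intro C' hC'
      obtain ⟨z, _, rfl⟩ := Finset.mem_image.1 hC'
      exact ih (by omega) z
    rw [Finset.sum_congr rfl hch, Finset.sum_sub_distrib, Finset.sum_comm, ← Finset.mul_sum,
      ← Finset.add_sum_Ioc_eq_sum_Icc (show l + 1 ≤ S.L by omega)]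
    have hIoc : Finset.Ioc (l + 1) S.L = Finset.Icc (l + 1 + 1) S.L := by
      ext i; simp only [Finset.mem_Ioc, Finset.mem_Icc]; omega
    rw [hIoc]
    have hg : ∀ l' ∈ Finset.Icc (l + 1 + 1) S.L,
        ∑ C' ∈ (S.cls l x).image (S.cls (l + 1)),
          (μ l' - μ (l' + 1)) * ∑ D ∈ C'.image (S.cls l'), xlogx (pC p D)
        = (μ l' - μ (l' + 1)) * ∑ D ∈ (S.cls l x).image (S.cls l'), xlogx (pC p D) := by
      intro l' hl'
      rw [Finset.mem_Icc] at hl'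
      rw [← Finset.mul_sum, sum_grandchildren S (by omega) (by omega) hl'.2]
    rw [Finset.sum_congr rfl hg]
    ring

theorem relEnt_congr (S : SimStruct X) (μ : ℕ → ℝ) {p p' : X → ℝ} (k : ℕ)
    (hk : k ≤ S.L) (x : X) (h : ∀ z ∈ S.cls (S.L - k) x, p z = p' z) :
    relEnt S μ p k (S.cls (S.L - k) x) = relEnt S μ p' k (S.cls (S.L - k) x) := by
  induction k generalizing x with
  | zero => rfl
  | succ k ih =>
    obtain ⟨l, hl⟩ : ∃ l, S.L - (k + 1) = l := ⟨_, rfl⟩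
    have hl1 : S.L - k = l + 1 := by omega
    rw [hl] at h
    rw [relEnt, relEnt, hl, hl1]
    rw [hl1] at ih
    have hsub : ∀ z ∈ S.cls l x, ∀ w ∈ S.cls (l + 1) z, p w = p' w := by
      intro z hz w hw
      refine h w ?_
      rw [← S.cls_congr l x z hz]
      exact S.cls_refines l z (by omega) hw
    have h1 : ∀ C' ∈ (S.cls l x).image (S.cls (l + 1)),
        relEnt S μ p k C' = relEnt S μ p' k C' := by
      intro C' hC'
      obtain ⟨z, hz, rfl⟩ := Finset.mem_image.1 hC'
      exact ih (by omega) z (hsub z hz)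
    have h2 : ∀ C' ∈ (S.cls l x).image (S.cls (l + 1)), xlogx (pC p C') = xlogx (pC p' C') := by
      intro C' hC'
      obtain ⟨z, hz, rfl⟩ := Finset.mem_image.1 hC'
      rw [pC, pC, Finset.sum_congr rfl (hsub z hz)]
    have h3 : pC p (S.cls l x) = pC p' (S.cls l x) := Finset.sum_congr rfl h
    rw [Finset.sum_congr rfl h1, Finset.sum_congr rfl h2, h3]

/-! ### Homogeneous form of the variational formula -/

/-- The inequality half, for nonnegative weights of arbitrary mass on the class. -/
theorem le_scoreAux (S : SimStruct X) (μ : ℕ → ℝ) (hμ : ∀ l, 1 ≤ l → l ≤ S.L → 0 < μ l)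
    (y p : X → ℝ) (hp : ∀ x, 0 ≤ p x) (k : ℕ) (hk : k ≤ S.L) (x : X) :
    ∑ z ∈ S.cls (S.L - k) x, y z * p z - relEnt S μ p k (S.cls (S.L - k) x)
      ≤ scoreAux S μ y k (S.cls (S.L - k) x) * pC p (S.cls (S.L - k) x) := by
  induction k generalizing x with
  | zero => simp [relEnt, scoreAux, pC, S.cls_L]
  | succ k ih =>
    obtain ⟨l, hl⟩ : ∃ l, S.L - (k + 1) = l := ⟨_, rfl⟩
    have hl1 : S.L - k = l + 1 := by omega
    rw [relEnt, scoreAux, hl, hl1]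
    rw [hl1] at ih
    have hm : 0 < μ (l + 1) := hμ _ (by omega) (by omega)
    have hne : ((S.cls l x).image (S.cls (l + 1))).Nonempty :=
      ⟨_, Finset.mem_image_of_mem _ (S.mem_cls l x)⟩
    have hG := gibbs_le _ hne (scoreAux S μ y k) (pC p) hm
      (fun C' _ => Finset.sum_nonneg fun z _ => hp z)
    have hpC : ∑ C' ∈ (S.cls l x).image (S.cls (l + 1)), pC p C' = pC p (S.cls l x) :=
      sum_children S (by omega) (by omega) x p
    rw [hpC] at hG
    have hch : ∑ C' ∈ (S.cls l x).image (S.cls (l + 1)),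
        (∑ z ∈ C', y z * p z - relEnt S μ p k C')
        ≤ ∑ C' ∈ (S.cls l x).image (S.cls (l + 1)), scoreAux S μ y k C' * pC p C' := by
      refine Finset.sum_le_sum fun C' hC' => ?_
      obtain ⟨z, _, rfl⟩ := Finset.mem_image.1 hC'
      exact ih (by omega) z
    rw [Finset.sum_sub_distrib, sum_children S (by omega) (by omega)] at hch
    linarith

/-- The equality half: a maximiser of any prescribed mass `Q > 0`, obtained by gluing maximisers
on the children whose masses are the logit weights of total mass `Q`. -/
theorem exists_eq_scoreAux (S : SimStruct X) (μ : ℕ → ℝ)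
    (hμ : ∀ l, 1 ≤ l → l ≤ S.L → 0 < μ l) (y : X → ℝ) (k : ℕ) (hk : k ≤ S.L) (x : X)
    {Q : ℝ} (hQ : 0 < Q) :
    ∃ p : X → ℝ, (∀ z, 0 ≤ p z) ∧ pC p (S.cls (S.L - k) x) = Q ∧
      ∑ z ∈ S.cls (S.L - k) x, y z * p z - relEnt S μ p k (S.cls (S.L - k) x)
        = scoreAux S μ y k (S.cls (S.L - k) x) * Q := by
  induction k generalizing x Q with
  | zero => exact ⟨fun _ => Q, fun _ => hQ.le, by simp [pC, S.cls_L],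
      by simp [relEnt, scoreAux, S.cls_L]⟩
  | succ k ih =>
    obtain ⟨l, hl⟩ : ∃ l, S.L - (k + 1) = l := ⟨_, rfl⟩
    have hl1 : S.L - k = l + 1 := by omega
    have hcongr := fun p p' z => relEnt_congr S μ (p := p) (p' := p') k (by omega) z
    simp only [relEnt, scoreAux, hl, hl1]
    rw [hl1] at ih hcongr
    have hm : 0 < μ (l + 1) := hμ _ (by omega) (by omega)
    have hne : ((S.cls l x).image (S.cls (l + 1))).Nonempty :=
      ⟨_, Finset.mem_image_of_mem _ (S.mem_cls l x)⟩
    obtain ⟨q, hq0, hqQ, hqeq⟩ := gibbs_eq _ hne (scoreAux S μ y k) hm hQ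
    choose P hP0 hPm hPeq using fun z => ih (by omega) z (hq0 (S.cls (l + 1) z))
    -- `P z` depends on `z`; `r` selects one representative per class, so that gluing agrees with
    -- a single `P` on each child.
    obtain ⟨r, hr⟩ : ∃ r : Finset X → X, ∀ z,
        S.cls (l + 1) (r (S.cls (l + 1) z)) = S.cls (l + 1) z :=
      ⟨fun C => if h : ∃ z, S.cls (l + 1) z = C then h.choose else x, fun z => by
        have h : ∃ w, S.cls (l + 1) w = S.cls (l + 1) z := ⟨z, rfl⟩
        simp only [h, dite_true]
        exact h.choose_spec⟩
    let p : X → ℝ := fun z => P (r (S.cls (l + 1) z)) z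
    have hpP : ∀ z, ∀ w ∈ S.cls (l + 1) z, p w = P (r (S.cls (l + 1) z)) w := by
      intro z w hw
      simp only [p, S.cls_congr _ z w hw]
    have hmass : ∀ C' ∈ (S.cls l x).image (S.cls (l + 1)), pC p C' = q C' := by
      intro C' hC'
      obtain ⟨z, _, rfl⟩ := Finset.mem_image.1 hC'
      have h := hPm (r (S.cls (l + 1) z))
      rw [hr] at h
      rw [← h]
      exact Finset.sum_congr rfl (hpP z)
    have hval : ∀ C' ∈ (S.cls l x).image (S.cls (l + 1)),
        ∑ z ∈ C', y z * p z - relEnt S μ p k C' = scoreAux S μ y k C' * q C' := by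
      intro C' hC'
      obtain ⟨z, _, rfl⟩ := Finset.mem_image.1 hC'
      have h := hPeq (r (S.cls (l + 1) z))
      rw [hr] at h
      rw [← h, hcongr _ _ z (hpP z)]
      congr 1
      exact Finset.sum_congr rfl fun w hw => by rw [hpP z w hw]
    have hpQ : pC p (S.cls l x) = Q := by
      rw [← hqQ, ← Finset.sum_congr rfl hmass]
      exact (sum_children S (by omega) (by omega) x p).symm
    refine ⟨p, fun z => hP0 _ z, hpQ, ?_⟩
    have hch := Finset.sum_congr rfl hval
    rw [Finset.sum_sub_distrib, sum_children S (by omega) (by omega)] at hch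
    rw [hpQ, Finset.sum_congr rfl fun C' hC' => congrArg xlogx (hmass C' hC'), ← hqeq, ← hch]
    ring

/-! ### Restriction to probability vectors -/

/-- On weights of unit mass the normalising term vanishes, as `1 * log 1 = 0`. -/
theorem nestEnt_eq_relEnt (S : SimStruct X) (μ : ℕ → ℝ) (hμ_last : μ (S.L + 1) = 0) (p : X → ℝ)
    (l : ℕ) (hl : l ≤ S.L) (x : X) (hp : pC p (S.cls l x) = 1) :
    nestEnt S μ p l (S.cls l x) = relEnt S μ p (S.L - l) (S.cls l x) := by
  have h := relEnt_eq S μ hμ_last p (S.L - l) (by omega) x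
  rw [Nat.sub_sub_self hl, hp] at h
  rw [h, nestEnt]
  have h1 : xlogx 1 = 0 := by simp [xlogx]
  rw [h1, mul_zero, sub_zero]
  rcases Nat.eq_zero_or_pos l with rfl | hpos
  · rfl
  · rw [max_eq_left hpos, ← Finset.add_sum_Ioc_eq_sum_Icc hl]
    have hIoc : Finset.Ioc l S.L = Finset.Icc (l + 1) S.L := by
      ext i; simp only [Finset.mem_Ioc, Finset.mem_Icc]; omega
    have himg : (S.cls l x).image (S.cls l) = {S.cls l x} := by
      refine Finset.eq_singleton_iff_unique_mem.2
        ⟨Finset.mem_image_of_mem _ (S.mem_cls l x), fun C hC => ?_⟩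
      obtain ⟨z, hz, rfl⟩ := Finset.mem_image.1 hC
      exact S.cls_congr l x z hz
    rw [hIoc, himg, Finset.sum_singleton, hp, h1, mul_zero, zero_add]

theorem stmt1 (S : SimStruct X) (μ : ℕ → ℝ)
    (hμ_mono : ∀ l : ℕ, 1 ≤ l → l < S.L → μ (l + 1) ≤ μ l)
    (hμ_pos : 0 < μ S.L) (hμ_last : μ (S.L + 1) = 0)
    (l : ℕ) (hlL : l ≤ S.L) (x₀ : X) (y : X → ℝ) :
    IsGreatest
      {v : ℝ | ∃ p ∈ simplex X, (∀ x, p x ≠ 0 → x ∈ S.cls l x₀) ∧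
        v = (∑ x, y x * p x) - nestEnt S μ p l (S.cls l x₀)}
      (score S μ y l (S.cls l x₀)) := by
  have hμ : ∀ l, 1 ≤ l → l ≤ S.L → 0 < μ l := by
    intro l h1 h2
    induction h2 using Nat.decreasingInduction with
    | self => exact hμ_pos
    | of_succ n hn ih => exact (ih (by omega)).trans_le (hμ_mono n h1 hn)
  have hsub : S.L - (S.L - l) = l := Nat.sub_sub_self hlL
  constructor
  · obtain ⟨p, hp0, hp1, hpe⟩ :=
      exists_eq_scoreAux S μ hμ y (S.L - l) (by omega) x₀ one_pos
    rw [hsub] at hp1 hpe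
    have hcongr := relEnt_congr S μ (p := p)
      (p' := fun x => if x ∈ S.cls l x₀ then p x else 0) (S.L - l) (by omega) x₀
    rw [hsub] at hcongr
    -- extending by zero outside the class changes nothing on it
    have hp1' : pC (fun x => if x ∈ S.cls l x₀ then p x else 0) (S.cls l x₀) = 1 := by
      rw [← hp1]
      exact Finset.sum_congr rfl fun z hz => by simp [hz]
    refine ⟨fun x => if x ∈ S.cls l x₀ then p x else 0, ⟨fun x => ?_, ?_⟩, fun x hx => ?_, ?_⟩
    · dsimp only
      split_ifs
      exacts [hp0 x, le_rfl]
    · rw [← hp1, pC]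
      simp [Finset.sum_ite_mem]
    · by_contra h
      simp [h] at hx
    · rw [nestEnt_eq_relEnt S μ hμ_last _ l hlL x₀ hp1', ← hcongr fun z hz => by simp [hz], score]
      rw [mul_one] at hpe
      rw [← hpe]
      simp [Finset.sum_ite_mem]
  · rintro v ⟨p, ⟨hp0, hp1⟩, hsupp, rfl⟩
    have hz : ∀ x, x ∉ S.cls l x₀ → p x = 0 := fun x hx => by
      by_contra h
      exact hx (hsupp x h)
    have hpC : pC p (S.cls l x₀) = 1 := by
      rw [← hp1]
      exact Finset.sum_subset (Finset.subset_univ _) fun x _ hx => hz x hx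
    have h := le_scoreAux S μ hμ y p hp0 (S.L - l) (by omega) x₀
    rw [hsub, hpC, mul_one] at h
    rw [nestEnt_eq_relEnt S μ hμ_last p l hlL x₀ hpC, score, ← Finset.sum_subset
      (Finset.subset_univ (S.cls l x₀)) fun x _ hx => by rw [hz x hx, mul_zero]]
    exact h

end NestedBandits
end
end

section
/- For all y, c ∈ R^X and every class C of level l < L, one has exp((y − c)_C / μ^(l+1)) = exp(y_C / μ^(l+1)) · σ_{c,y}(C), where (y − c)_C denotes the class score of the vector y − c. -/
/-!
Exponentiating the log-sum-exp recursion turns it into `exp (y_C / μ) = ∑ exp (y_{C'} / μ)`, the sum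
running over the children `C'` of `C`; the logarithm is harmless because the sum is positive
(`exp_scoreAux_succ`). The identity then follows by induction on the number of levels below `C`
(`exp_scoreAux_sub`). One level above the singletons, the factor `exp (y_C / μ)` cancels the
denominator of the choice probabilities. Higher up, raising the identity for a child `C'` to the
power `μ (l + 2) / μ (l + 1)` converts the parameter from `μ (l + 2)` to `μ (l + 1)`, and the
conditional choice probabilities in the power sum again cancel against `exp (y_C / μ (l + 1))`.
-/

noncomputable section

namespace NestedBandits

variable {X : Type*} [Fintype X] [DecidableEq X]

/-- The class-score recursion in exponential form. -/
lemma exp_scoreAux_succ (S : SimStruct X) (μ : ℕ → ℝ) (y : X → ℝ) (k : ℕ) (C : Finset X)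
    (hC : C.Nonempty) (hμ : μ (S.L - k) ≠ 0) :
    Real.exp (scoreAux S μ y (k + 1) C / μ (S.L - k)) =
      ∑ C' ∈ C.image (S.cls (S.L - k)), Real.exp (scoreAux S μ y k C' / μ (S.L - k)) := by
  rw [scoreAux, mul_div_cancel_left₀ _ hμ, Real.exp_log]
  exact Finset.sum_pos (fun _ _ => Real.exp_pos _) (hC.image _)

/-- Positivity of `μ` at level `S.L` propagates to all levels above it, by monotonicity. -/
lemma mu_pos (S : SimStruct X) (μ : ℕ → ℝ)
    (hμ_mono : ∀ l : ℕ, 1 ≤ l → l < S.L → μ (l + 1) ≤ μ l) (hμ_pos : 0 < μ S.L)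
    (k : ℕ) (hk : k < S.L) : 0 < μ (S.L - k) := by
  induction k with
  | zero => simpa using hμ_pos
  | succ k ih =>
    have h := hμ_mono (S.L - (k + 1)) (by omega) (by omega)
    rw [show S.L - (k + 1) + 1 = S.L - k by omega] at h
    exact (ih (by omega)).trans_le h

/-- One level above the singletons, the choice probability is a single softmax ratio. -/
lemma condProb_last (S : SimStruct X) (μ : ℕ → ℝ) (y : X → ℝ) (x : X) :
    condProb S μ y (S.L - 1) x =
      Real.exp ((y x - scoreAux S μ y 1 (S.cls (S.L - 1) x)) / μ S.L) := by
  have hL := S.one_le_L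
  have hI : Finset.Ico (S.L - 1) S.L = {S.L - 1} := by
    ext a
    simp only [Finset.mem_Ico, Finset.mem_singleton]
    omega
  rw [condProb, hI, Finset.prod_singleton, Nat.sub_add_cancel hL, score, score, Nat.sub_self,
    Nat.sub_sub_self hL, S.cls_L]
  simp [scoreAux]

/-- The children of a class one level above the singletons are the singletons of its elements. -/
lemma exp_scoreAux_one (S : SimStruct X) (μ : ℕ → ℝ) (y : X → ℝ) (C : Finset X)
    (hC : C.Nonempty) (hμ : μ S.L ≠ 0) :
    Real.exp (scoreAux S μ y 1 C / μ S.L) = ∑ x ∈ C, Real.exp (y x / μ S.L) := by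
  have h := exp_scoreAux_succ S μ y 0 C hC (by simpa using hμ)
  rw [Nat.sub_zero, Nat.zero_add] at h
  rw [h, Finset.sum_image]
  · simp [S.cls_L, scoreAux]
  · intro a _ b _ hab
    simpa [S.cls_L] using hab

/-- The power sum identity, indexed by the number `k + 1` of levels below the class. -/
lemma exp_scoreAux_sub (S : SimStruct X) (μ : ℕ → ℝ)
    (hμ_mono : ∀ l : ℕ, 1 ≤ l → l < S.L → μ (l + 1) ≤ μ l) (hμ_pos : 0 < μ S.L)
    (y c : X → ℝ) (k : ℕ) (hk : k < S.L) (x₀ : X) :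
    Real.exp (scoreAux S μ (fun x => y x - c x) (k + 1) (S.cls (S.L - (k + 1)) x₀)
        / μ (S.L - k)) =
      Real.exp (scoreAux S μ y (k + 1) (S.cls (S.L - (k + 1)) x₀) / μ (S.L - k)) *
        npsAux S μ y c (k + 1) (S.cls (S.L - (k + 1)) x₀) := by
  induction k generalizing x₀ with
  | zero =>
    simp only [Nat.sub_zero, Nat.zero_add]
    rw [exp_scoreAux_one S μ _ _ ⟨x₀, S.mem_cls _ _⟩ hμ_pos.ne', npsAux, Finset.mul_sum]
    refine Finset.sum_congr rfl fun x hx => ?_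
    rw [condProb_last, S.cls_congr _ _ _ hx, ← Real.exp_add, ← Real.exp_add]
    congr 1
    ring
  | succ k ih =>
    have hμ₁ := mu_pos S μ hμ_mono hμ_pos (k + 1) hk
    have hμ₂ := mu_pos S μ hμ_mono hμ_pos k (by omega)
    rw [exp_scoreAux_succ S μ _ (k + 1) _ ⟨x₀, S.mem_cls _ _⟩ hμ₁.ne', npsAux, Finset.mul_sum]
    refine Finset.sum_congr rfl fun C' hC' => ?_
    obtain ⟨x, -, rfl⟩ := Finset.mem_image.1 hC'
    have hx := ih (by omega) x
    -- Nonnegativity of the power sum of the child, needed to distribute the real power,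
    -- is read off from the identity for the child.
    have hσ : 0 ≤ npsAux S μ y c (k + 1) (S.cls (S.L - (k + 1)) x) :=
      nonneg_of_mul_nonneg_right (hx ▸ (Real.exp_pos _).le) (Real.exp_pos _)
    have hpow : ∀ t : ℝ, Real.exp (t / μ (S.L - (k + 1))) =
        Real.exp (t / μ (S.L - k)) ^ (μ (S.L - k) / μ (S.L - (k + 1))) := by
      intro t
      rw [← Real.exp_mul, div_mul_div_cancel₀ hμ₂.ne']
    rw [hpow, hx, Real.mul_rpow (Real.exp_pos _).le hσ, ← hpow, ← mul_assoc, ← Real.exp_add,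
      score, score, Nat.sub_sub_self hk.le, Nat.sub_sub_self (show k + 2 ≤ S.L from hk)]
    congr 2
    ring

theorem stmt3 (S : SimStruct X) (μ : ℕ → ℝ)
    (hμ_mono : ∀ l : ℕ, 1 ≤ l → l < S.L → μ (l + 1) ≤ μ l)
    (hμ_pos : 0 < μ S.L) (hμ_last : μ (S.L + 1) = 0)
    (y c : X → ℝ) (l : ℕ) (hl : l < S.L) (x₀ : X) :
    Real.exp (score S μ (fun x => y x - c x) l (S.cls l x₀) / μ (l + 1)) =
      Real.exp (score S μ y l (S.cls l x₀) / μ (l + 1)) * nps S μ y c l (S.cls l x₀) := by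
  obtain ⟨k, hk⟩ : ∃ k, S.L - l = k + 1 := ⟨S.L - l - 1, by omega⟩
  have h := exp_scoreAux_sub S μ hμ_mono hμ_pos y c k (by omega) x₀
  rw [show S.L - (k + 1) = l by omega, show S.L - k = l + 1 by omega] at h
  rw [score, score, nps, hk]
  exact h

end NestedBandits
end
end

section
/- If c ∈ R^X has c_x ≥ 0 for all x ∈ X, then for every y ∈ R^X: (y − c)_X − y_X ≤ − ∑_{x∈X} P_x(y) c_x + (1/(2 μ^L)) ∑_{x∈X} P_x(y) c_x², where (y − c)_X and y_X denote the root class scores of the vectors y − c and y. -/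
noncomputable section

namespace NestedBandits

variable {X : Type*} [Fintype X] [DecidableEq X]

/-!
Write `m = μ S.L` for the smallest uncertainty parameter, and `δ_C` for the change of the score of a
class `C` when `y` is replaced by `y - c`. The key estimate is the bound
`exp (δ_C / m) ≤ ∑ x ∈ C, P_{x|C}(y) * exp (-c x / m)` (`exp_score_diff_le`), proved by induction
from the singletons up to the root. In the step at a class of level `l`, with `ν = μ (l + 1)`, the
definition of the scores gives `exp (δ_C / ν) = ∑ C', P_{C'|C} * exp (δ_{C'} / ν)`; raising this to
the power `ν / m ≥ 1` and applying Jensen's inequality yields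
`exp (δ_C / m) ≤ ∑ C', P_{C'|C} * exp (δ_{C'} / m)` (`exp_lse_diff_le`).

At the root, `δ_X ≤ m * (exp (δ_X / m) - 1)`, and the theorem follows from
`exp (-t) ≤ 1 - t + t ^ 2 / 2` for `t ≥ 0`, together with the fact that the choice probabilities
sum to one (`sum_condProb`).
-/

/-- Softmax weights sum to one. -/
lemma sum_softmax {ι : Type*} (s : Finset ι) (hs : s.Nonempty) (u : ι → ℝ) {ν : ℝ} (hν : 0 < ν) :
    ∑ i ∈ s, Real.exp ((u i - ν * Real.log (∑ j ∈ s, Real.exp (u j / ν))) / ν) = 1 := by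
  have hpos : 0 < ∑ j ∈ s, Real.exp (u j / ν) := Finset.sum_pos (fun _ _ => Real.exp_pos _) hs
  have h : ∀ i ∈ s, Real.exp ((u i - ν * Real.log (∑ j ∈ s, Real.exp (u j / ν))) / ν)
      = Real.exp (u i / ν) / ∑ j ∈ s, Real.exp (u j / ν) := fun i _ => by
    rw [sub_div, mul_div_cancel_left₀ _ hν.ne', Real.exp_sub, Real.exp_log hpos]
  rw [Finset.sum_congr rfl h, ← Finset.sum_div, div_self hpos.ne']

/-- Jensen's inequality for the increment of the log-sum-exp function with parameter `ν`, measured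
on a finer scale `m ≤ ν`. -/
lemma exp_lse_diff_le {ι : Type*} (s : Finset ι) (hs : s.Nonempty) (u v : ι → ℝ) {ν m : ℝ}
    (hm : 0 < m) (hmν : m ≤ ν) :
    Real.exp ((ν * Real.log (∑ j ∈ s, Real.exp (v j / ν))
        - ν * Real.log (∑ j ∈ s, Real.exp (u j / ν))) / m) ≤
      ∑ i ∈ s, Real.exp ((u i - ν * Real.log (∑ j ∈ s, Real.exp (u j / ν))) / ν)
        * Real.exp ((v i - u i) / m) := by
  have hν : 0 < ν := hm.trans_le hmν
  have hv : 0 < ∑ j ∈ s, Real.exp (v j / ν) := Finset.sum_pos (fun _ _ => Real.exp_pos _) hs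
  have hsum := sum_softmax s hs u hν
  set A := ν * Real.log (∑ j ∈ s, Real.exp (u j / ν)) with hA
  set B := ν * Real.log (∑ j ∈ s, Real.exp (v j / ν)) with hB
  have hJ := Real.rpow_arith_mean_le_arith_mean_rpow s (fun i => Real.exp ((u i - A) / ν))
    (fun i => Real.exp ((v i - u i) / ν)) (fun _ _ => (Real.exp_pos _).le) hsum
    (fun _ _ => (Real.exp_pos _).le) ((one_le_div hm).2 hmν)
  have hmean : ∑ i ∈ s, Real.exp ((u i - A) / ν) * Real.exp ((v i - u i) / ν)
      = Real.exp ((B - A) / ν) := by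
    have h : ∀ i ∈ s, Real.exp ((u i - A) / ν) * Real.exp ((v i - u i) / ν)
        = Real.exp (v i / ν) * Real.exp (-A / ν) := fun i _ => by
      rw [← Real.exp_add, ← Real.exp_add]; congr 1; ring
    rw [Finset.sum_congr rfl h, ← Finset.sum_mul, sub_div, hB, mul_div_cancel_left₀ _ hν.ne',
      sub_eq_add_neg, Real.exp_add, Real.exp_log hv, neg_div]
  have hpow : ∀ t : ℝ, Real.exp (t / ν) ^ (ν / m) = Real.exp (t / m) := fun t => by
    rw [← Real.exp_mul]; congr 1; field_simp
  simpa only [hmean, hpow] using hJ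

/-- The recursion defining the class scores. -/
lemma score_of_lt (S : SimStruct X) (μ : ℕ → ℝ) (y : X → ℝ) {l : ℕ} (hl : l < S.L)
    (C : Finset X) :
    score S μ y l C = μ (l + 1) *
      Real.log (∑ C' ∈ C.image (S.cls (l + 1)),
        Real.exp (score S μ y (l + 1) C' / μ (l + 1))) := by
  obtain ⟨k, hk⟩ : ∃ k, S.L = l + 1 + k := ⟨S.L - (l + 1), by omega⟩
  have h1 : S.L - l = k + 1 := by omega
  have h2 : S.L - (l + 1) = k := by omega
  have h3 : S.L - k = l + 1 := by omega
  simp only [score, h1, h2, scoreAux, h3]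

/-- The law of total expectation: a conditional expectation given a class of level `l` is obtained
by first conditioning on its children. -/
lemma sum_condProb_mul (S : SimStruct X) (μ : ℕ → ℝ) (y f : X → ℝ) {l : ℕ} (hl : l < S.L)
    (x₀ : X) :
    ∑ x ∈ S.cls l x₀, condProb S μ y l x * f x =
      ∑ C' ∈ (S.cls l x₀).image (S.cls (l + 1)),
        Real.exp ((score S μ y (l + 1) C' - score S μ y l (S.cls l x₀)) / μ (l + 1)) *
          ∑ x ∈ C', condProb S μ y (l + 1) x * f x := by
  rw [← Finset.sum_fiberwise_of_maps_to
    (fun x hx => Finset.mem_image_of_mem (S.cls (l + 1)) hx)]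
  refine Finset.sum_congr rfl fun C' hC' => ?_
  obtain ⟨z, hz, rfl⟩ := Finset.mem_image.1 hC'
  have hfib : (S.cls l x₀).filter (fun x => S.cls (l + 1) x = S.cls (l + 1) z)
      = S.cls (l + 1) z := by
    ext x
    simp only [Finset.mem_filter]
    refine ⟨fun h => h.2 ▸ S.mem_cls _ _, fun h => ⟨?_, S.cls_congr _ _ _ h⟩⟩
    rw [← S.cls_congr l x₀ z hz]
    exact S.cls_refines l z hl h
  rw [hfib, Finset.mul_sum]
  refine Finset.sum_congr rfl fun x hx => ?_
  have hx1 : S.cls (l + 1) x = S.cls (l + 1) z := S.cls_congr _ _ _ hx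
  have hx0 : S.cls l x = S.cls l x₀ := by
    rw [← S.cls_congr l x₀ z hz]
    exact S.cls_congr _ _ _ (S.cls_refines l z hl hx)
  rw [condProb, Finset.prod_eq_prod_Ico_succ_bot hl, hx1, hx0, mul_assoc]
  rfl

lemma mu_last_le (S : SimStruct X) (μ : ℕ → ℝ)
    (hμ_mono : ∀ l : ℕ, 1 ≤ l → l < S.L → μ (l + 1) ≤ μ l) {l : ℕ} (hl : l ≤ S.L) :
    1 ≤ l → μ S.L ≤ μ l := by
  induction hl using Nat.decreasingInduction with
  | self => exact fun _ => le_rfl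
  | of_succ k hk ih => exact fun h => (ih (by omega)).trans (hμ_mono k h hk)

lemma children_nonempty (S : SimStruct X) (l : ℕ) (x₀ : X) :
    ((S.cls l x₀).image (S.cls (l + 1))).Nonempty :=
  Finset.Nonempty.image ⟨x₀, S.mem_cls l x₀⟩ _

/-- The choice probabilities conditional on a class sum to one. -/
lemma sum_condProb (S : SimStruct X) (μ : ℕ → ℝ)
    (hμ_mono : ∀ l : ℕ, 1 ≤ l → l < S.L → μ (l + 1) ≤ μ l) (hμ_pos : 0 < μ S.L)
    (y : X → ℝ) {l : ℕ} (hl : l ≤ S.L) (x₀ : X) :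
    ∑ x ∈ S.cls l x₀, condProb S μ y l x = 1 := by
  induction hl using Nat.decreasingInduction generalizing x₀ with
  | self => simp [S.cls_L, condProb]
  | of_succ l hl ih =>
    have hν : 0 < μ (l + 1) := hμ_pos.trans_le (mu_last_le S μ hμ_mono hl (by omega))
    have h := sum_condProb_mul S μ y (fun _ => 1) hl x₀
    simp only [mul_one] at h
    rw [h, score_of_lt S μ y hl, ← sum_softmax _ (children_nonempty S l x₀)
      (fun C' => score S μ y (l + 1) C') hν]
    refine Finset.sum_congr rfl fun C' hC' => ?_
    obtain ⟨z, -, rfl⟩ := Finset.mem_image.1 hC'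
    rw [ih z, mul_one]

/-- On the finest scale `μ S.L`, the exponential of the score increment of a class is at most the
conditional expectation of the exponentials of the increments of its elements. -/
lemma exp_score_diff_le (S : SimStruct X) (μ : ℕ → ℝ)
    (hμ_mono : ∀ l : ℕ, 1 ≤ l → l < S.L → μ (l + 1) ≤ μ l) (hμ_pos : 0 < μ S.L)
    (c y : X → ℝ) {l : ℕ} (hl : l ≤ S.L) (x₀ : X) :
    Real.exp ((score S μ (fun x => y x - c x) l (S.cls l x₀) - score S μ y l (S.cls l x₀))
        / μ S.L) ≤
      ∑ x ∈ S.cls l x₀, condProb S μ y l x * Real.exp (-c x / μ S.L) := by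
  induction hl using Nat.decreasingInduction generalizing x₀ with
  | self => simp [S.cls_L, condProb, score, scoreAux]
  | of_succ l hl ih =>
    have hν : μ S.L ≤ μ (l + 1) := mu_last_le S μ hμ_mono hl (by omega)
    rw [sum_condProb_mul S μ y _ hl x₀, score_of_lt S μ y hl, score_of_lt S μ _ hl]
    refine (exp_lse_diff_le _ (children_nonempty S l x₀) (fun C' => score S μ y (l + 1) C')
      (fun C' => score S μ (fun x => y x - c x) (l + 1) C') hμ_pos hν).trans ?_
    refine Finset.sum_le_sum fun C' hC' => ?_
    obtain ⟨z, -, rfl⟩ := Finset.mem_image.1 hC'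
    exact mul_le_mul_of_nonneg_left (ih z) (Real.exp_pos _).le

lemma exp_neg_le_quadratic {t : ℝ} (ht : 0 ≤ t) : Real.exp (-t) ≤ 1 - t + t ^ 2 / 2 := by
  -- `exp t ≥ 1 + t + t ^ 2 / 2`, and `(1 - t + t ^ 2 / 2) * (1 + t + t ^ 2 / 2) = 1 + t ^ 4 / 4`.
  have h := Real.quadratic_le_exp_of_nonneg ht
  have hq : 0 < 1 - t + t ^ 2 / 2 := by nlinarith [sq_nonneg (t - 1)]
  rw [Real.exp_neg, inv_le_iff_one_le_mul₀ (Real.exp_pos t)]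
  nlinarith [mul_le_mul_of_nonneg_left h hq.le, sq_nonneg (t ^ 2)]

theorem stmt7 (S : SimStruct X) (μ : ℕ → ℝ)
    (hμ_mono : ∀ l : ℕ, 1 ≤ l → l < S.L → μ (l + 1) ≤ μ l)
    (hμ_pos : 0 < μ S.L) (hμ_last : μ (S.L + 1) = 0)
    (c : X → ℝ) (hc : ∀ x, 0 ≤ c x) (y : X → ℝ) :
    score S μ (fun x => y x - c x) 0 Finset.univ - score S μ y 0 Finset.univ ≤
      -(∑ x, condProb S μ y 0 x * c x) +
        (1 / (2 * μ S.L)) * ∑ x, condProb S μ y 0 x * c x ^ 2 := by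
  rcases isEmpty_or_nonempty X with hX | ⟨⟨x₀⟩⟩
  -- With no alternatives, both scores are `μ 1 * log 0 = 0`.
  · simp [score_of_lt S μ _ S.one_le_L, Finset.univ_eq_empty]
  have hE := exp_score_diff_le S μ hμ_mono hμ_pos c y (Nat.zero_le _) x₀
  have hS := sum_condProb S μ hμ_mono hμ_pos y (Nat.zero_le _) x₀
  rw [S.cls_zero] at hE hS
  set D := score S μ (fun x => y x - c x) 0 Finset.univ - score S μ y 0 Finset.univ
  set m := μ S.L
  have hD : D / m + 1 ≤ ∑ x, condProb S μ y 0 x * (1 - c x / m + (c x / m) ^ 2 / 2) := by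
    refine (Real.add_one_le_exp _).trans (hE.trans (Finset.sum_le_sum fun x _ => ?_))
    rw [neg_div]
    exact mul_le_mul_of_nonneg_left (exp_neg_le_quadratic (div_nonneg (hc x) hμ_pos.le))
      (Finset.prod_nonneg fun _ _ => (Real.exp_pos _).le)
  have hR : ∑ x, condProb S μ y 0 x * (1 - c x / m + (c x / m) ^ 2 / 2) =
      ∑ x, condProb S μ y 0 x + (-(∑ x, condProb S μ y 0 x * c x) +
        (1 / (2 * m)) * ∑ x, condProb S μ y 0 x * c x ^ 2) / m := by
    rw [Finset.mul_sum, ← Finset.sum_neg_distrib, ← Finset.sum_add_distrib,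
      Finset.sum_div, ← Finset.sum_add_distrib]
    refine Finset.sum_congr rfl fun x _ => ?_
    field_simp
    ring
  rw [hR, hS] at hD
  exact (div_le_div_iff_of_pos_right hμ_pos).1 (by linarith)

end NestedBandits
end
end
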